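/- If X is a compact Hausdorff space, M ≺ H(κ) a countable elementary submodel with X ∈ M, and L = 2^X ∩ M, then the covering dimension of the Wallman space wL equals the covering dimension of X. -/

import Mathlib

open Set TopologicalSpace FirstOrder

universe u v

/-- `U` is a cover of `X` by open sets. -/
def IsOpenCover {X : Type u} [TopologicalSpace X] (U : Set (Set X)) : Prop :=
  (∀ s ∈ U, IsOpen s) ∧ ⋃₀ U = Set.univ

/-- `V` refines `U`: every member of `V` is contained in some member of `U`. -/
def Refines {X : Type u} (V U : Set (Set X)) : Prop :=
  ∀ v ∈ V, ∃ u ∈ U, v ⊆ u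

/-- `X` is a C-space (has property C): every sequence of open covers admits a sequence of
families of pairwise disjoint open sets, the `i`-th refining the `i`-th cover, whose union
covers `X`. -/
def IsCSpace (X : Type u) [TopologicalSpace X] : Prop :=
  ∀ U : ℕ → Set (Set X), (∀ i, IsOpenCover (U i)) →
    ∃ V : ℕ → Set (Set X),
      (∀ i, (∀ s ∈ V i, IsOpen s) ∧ (V i).PairwiseDisjoint id ∧ Refines (V i) (U i)) ∧
      (⋃ i, ⋃₀ (V i)) = Set.univ

/-- `X` is an `m`-C-space: property C restricted to `m`-element open covers. -/
def IsMCSpace (m : ℕ) (X : Type u) [TopologicalSpace X] : Prop :=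
  ∀ U : ℕ → Fin m → Set X, (∀ i j, IsOpen (U i j)) → (∀ i, (⋃ j, U i j) = Set.univ) →
    ∃ V : ℕ → Set (Set X),
      (∀ i, (∀ s ∈ V i, IsOpen s) ∧ (V i).PairwiseDisjoint id ∧ ∀ v ∈ V i, ∃ j, v ⊆ U i j) ∧
      (⋃ i, ⋃₀ (V i)) = Set.univ

/-- Covering dimension at most `n`: every finite open cover has a finite open refinement
of order at most `n + 1`. -/
def CovDimLE (X : Type u) [TopologicalSpace X] (n : ℕ) : Prop :=
  ∀ U : Set (Set X), U.Finite → IsOpenCover U →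
    ∃ V : Set (Set X), V.Finite ∧ IsOpenCover V ∧ Refines V U ∧
      ∀ x : X, {v ∈ V | x ∈ v}.ncard ≤ n + 1

/-- The covering dimension, as an extended natural number (`⊤` if infinite dimensional). -/
noncomputable def covDim (X : Type u) [TopologicalSpace X] : ℕ∞ :=
  sInf ((fun n : ℕ => (n : ℕ∞)) '' {n : ℕ | CovDimLE X n})

/-- An ultrafilter on a lattice `F` of subsets of `α` (in the Wallman sense): a proper filter
on `F` such that every member of `F` meeting all members of the filter belongs to it. -/
structure LUltra {α : Type u} (F : Set (Set α)) where
  sets : Set (Set α)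
  sets_subset : sets ⊆ F
  univ_mem : Set.univ ∈ sets
  empty_notMem : ∅ ∉ sets
  inter_mem : ∀ a ∈ sets, ∀ b ∈ sets, a ∩ b ∈ sets
  superset_mem : ∀ a ∈ sets, ∀ b ∈ F, a ⊆ b → b ∈ sets
  ultra : ∀ a ∈ F, a ∉ sets → ∃ b ∈ sets, a ∩ b = ∅

/-- The Wallman topology: the sets `â = {u : a ∈ u}`, `a ∈ F`, form a base for closed sets. -/
instance LUltra.instTopologicalSpace {α : Type u} (F : Set (Set α)) :
    TopologicalSpace (LUltra F) :=
  TopologicalSpace.generateFrom {s | ∃ a ∈ F, s = {u : LUltra F | a ∈ u.sets}ᶜ}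

/-- `x ∈ H(κ)`: `x` hereditarily has cardinality `< κ` (for regular `κ` this agrees with
`|TC(x)| < κ`). -/
def HeredLt (κ : Cardinal.{1}) (x : ZFSet.{0}) : Prop :=
  ZFSet.mem_wf.fix (fun x ih => Cardinal.mk x.toSet < κ ∧ ∀ y, ∀ h : y ∈ x, ih y h) x

/-- `ZFSet` as a structure for the language with one binary relation, interpreted as `∈`. -/
instance ZFSet.memLangStructure : FirstOrder.Language.graph.Structure ZFSet.{0} where
  funMap := fun {_} f => isEmptyElim f
  RelMap := fun {_} r => match r with | .adj => fun x => x 0 ∈ x 1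

/-- `H(κ)` as a substructure of the universe of sets with membership. -/
def HKappa (κ : Cardinal.{1}) : FirstOrder.Language.graph.Substructure ZFSet.{0} where
  carrier := {x | HeredLt κ x}
  fun_mem := fun {_} f => isEmptyElim f

/-- `z` belongs to the elementary submodel `M ≺ H(κ)`. -/
def MemOf (κ : Cardinal.{1})
    (M : FirstOrder.Language.graph.ElementarySubstructure (HKappa κ))
    (z : ZFSet.{0}) : Prop :=
  ∃ h : z ∈ HKappa κ, (⟨z, h⟩ : HKappa κ) ∈ M

/-- The ZF-set coding a subset `A` of (the extension of) the ZF-set `X`. -/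
noncomputable def codeSet (X : ZFSet.{0}) (A : Set ↥X.toSet) : ZFSet.{0} :=
  ZFSet.sep (fun y => ∃ h : y ∈ X.toSet, (⟨y, h⟩ : ↥X.toSet) ∈ A) X

/-- The subset of `X` decoded from a ZF-set `t`. -/
def decodeSet (X : ZFSet.{0}) (t : ZFSet.{0}) : Set ↥X.toSet :=
  {p : ↥X.toSet | (p : ZFSet) ∈ t}

/-- The ZF-set coding the topology of the space `X`: the set of codes of open subsets. -/
noncomputable def opensZ (X : ZFSet.{0}) [TopologicalSpace ↥X.toSet] : ZFSet.{0} :=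
  ZFSet.sep (fun t => IsOpen (decodeSet X t)) X.powerset

/-- The lattice `L = 2^X ∩ M`: the closed subsets of `X` whose codes belong to `M`. -/
def Lfam (X : ZFSet.{0}) [TopologicalSpace ↥X.toSet] (κ : Cardinal.{1})
    (M : FirstOrder.Language.graph.ElementarySubstructure (HKappa κ)) :
    Set (Set ↥X.toSet) :=
  {A | IsClosed A ∧ MemOf κ M (codeSet X A)}

/-!
The covering dimension of any space can be read off the lattice of its closed sets: `dim ≤ n` says
that every finite family of closed sets with empty intersection has a closed swelling of order at
most `n + 1`. By compactness of `wL`, a finite family of closed sets in `wL` with empty intersection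
can be enlarged to basic closed sets `â` without losing empty intersection, and `a ↦ â` is a lattice
embedding because `L` is disjunctive; hence `dim wL` is the dimension of the lattice `L`.

Being a swelling of order at most `n + 1` is a Boolean condition on membership at each point of `X`,
hence first-order over `H(κ)` in terms of `X` and its topology. By elementarity a family of closed
sets without a swelling, or a swelling of a family in `M`, can be found in `M` as soon as it exists
at all, so `L = 2^X ∩ M` has the same dimension as the lattice `2^X`.
-/

/-- `G` is a swelling of `F` with empty intersection such that every point lies outside at most
`n + 1` of the sets `G i`. Complements turn this into a shrinking of an open cover to a cover of
order at most `n + 1`; the order is expressed by finite unions so as to be lattice-theoretic. -/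
structure IsSwelling {T : Type u} {ι : Type v} (n : ℕ) (F G : ι → Set T) : Prop where
  subset : ∀ i, F i ⊆ G i
  iInter_eq_empty : ⋂ i, G i = ∅
  biUnion_eq_univ : ∀ S : Finset ι, S.card = n + 2 → ⋃ i ∈ S, G i = univ

/-- The lattice `L` of closed sets has covering dimension at most `n`: every finite family in `L`
with empty intersection has a swelling in `L` of order at most `n + 1`. -/
def LatticeDimLE {T : Type u} (L : Set (Set T)) (n : ℕ) : Prop :=
  ∀ (m : ℕ) (F : Fin m → Set T), (∀ i, F i ∈ L) → ⋂ i, F i = ∅ →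
    ∃ G : Fin m → Set T, (∀ i, G i ∈ L) ∧ IsSwelling n F G

section Swelling

variable {T : Type u} {ι : Type v} {n : ℕ} {F G H : ι → Set T}

theorem IsSwelling.anti_left (h : IsSwelling n G H) (hFG : ∀ i, F i ⊆ G i) : IsSwelling n F H :=
  ⟨fun i => (hFG i).trans (h.subset i), h.iInter_eq_empty, h.biUnion_eq_univ⟩

theorem IsSwelling.mono_right (h : IsSwelling n F G) (hGH : ∀ i, G i ⊆ H i)
    (hH : ⋂ i, H i = ∅) : IsSwelling n F H :=
  ⟨fun i => (h.subset i).trans (hGH i), hH, fun S hS =>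
    univ_subset_iff.1 <| (h.biUnion_eq_univ S hS).ge.trans <|
      biUnion_mono subset_rfl fun i _ => hGH i⟩

theorem isSwelling_iff_forall_point : IsSwelling n F G ↔
    ∀ x, (∀ i, x ∈ F i → x ∈ G i) ∧ (∃ i, x ∉ G i) ∧
      ∀ S : Finset ι, S.card = n + 2 → ∃ i ∈ S, x ∈ G i := by
  constructor
  · rintro ⟨hFG, hG, hS⟩ x
    refine ⟨fun i hx => hFG i hx, ?_, fun S hc => ?_⟩
    · simpa only [mem_iInter, not_forall] using eq_empty_iff_forall_notMem.1 hG x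
    · simpa only [mem_iUnion, exists_prop] using eq_univ_iff_forall.1 (hS S hc) x
  · intro h
    refine ⟨fun i x => (h x).1 i, eq_empty_of_forall_notMem fun x hx => ?_,
      fun S hc => eq_univ_of_forall fun x => ?_⟩
    · obtain ⟨i, hi⟩ := (h x).2.1
      exact hi (mem_iInter.1 hx i)
    · simpa only [mem_iUnion, exists_prop] using (h x).2.2 S hc

theorem biUnion_eq_univ_iff_ncard_le [Finite ι] :
    (∀ S : Finset ι, S.card = n + 2 → ⋃ i ∈ S, G i = univ) ↔
      ∀ x, {i | x ∉ G i}.ncard ≤ n + 1 := by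
  simp only [eq_univ_iff_forall, mem_iUnion, exists_prop]
  constructor
  · intro h x
    by_contra! hcard
    obtain ⟨S, hS, hSc⟩ := exists_subset_card_eq (show n + 2 ≤ {i | x ∉ G i}.ncard from hcard)
    lift S to Finset ι using toFinite S
    obtain ⟨i, hi, hx⟩ := h S (by rwa [ncard_coe_finset] at hSc) x
    exact hS hi hx
  · intro h S hS x
    by_contra! hx
    have hle : (S : Set ι).ncard ≤ {i | x ∉ G i}.ncard := ncard_le_ncard hx (toFinite _)
    rw [ncard_coe_finset] at hle
    have := h x
    omega

end Swelling

section CovDim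

variable {Y : Type u} [TopologicalSpace Y] {n : ℕ}

theorem CovDimLE.latticeDimLE (h : CovDimLE Y n) : LatticeDimLE {C : Set Y | IsClosed C} n := by
  intro m F hF hF0
  have hcover : ⋃₀ range (fun i => (F i)ᶜ) = univ := by
    rw [sUnion_range, ← compl_iInter, hF0, compl_empty]
  obtain ⟨V, hVfin, ⟨hVo, hVc⟩, hVF, hVn⟩ := h (range fun i => (F i)ᶜ) (finite_range _)
    ⟨forall_mem_range.2 fun i => (hF i).isOpen_compl, hcover⟩
  have hr : ∀ v : V, ∃ i, v.1 ⊆ (F i)ᶜ := fun v => by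
    simpa only [exists_range_iff] using hVF v.1 v.2
  choose f hf using hr
  refine ⟨fun i => (⋃ v ∈ f ⁻¹' {i}, v.1)ᶜ, fun i => ?_, fun i => ?_, ?_, ?_⟩
  · exact (isOpen_biUnion fun v _ => hVo v.1 v.2).isClosed_compl
  · refine subset_compl_comm.1 (iUnion₂_subset ?_)
    rintro v rfl
    exact hf v
  · refine eq_empty_of_forall_notMem fun x hx => ?_
    obtain ⟨v, hv, hxv⟩ := hVc.ge (mem_univ x)
    exact mem_iInter.1 hx (f ⟨v, hv⟩) (mem_biUnion rfl hxv)
  · refine biUnion_eq_univ_iff_ncard_le.2 fun x => ?_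
    have := hVfin.to_subtype
    calc {i | x ∉ (⋃ v ∈ f ⁻¹' {i}, v.1)ᶜ}.ncard
        ≤ (f '' {v : V | x ∈ v.1}).ncard := by
          refine ncard_le_ncard (fun i hi => ?_) (toFinite _)
          obtain ⟨v, hv, hxv⟩ := mem_iUnion₂.1 (not_not.1 hi)
          exact ⟨v, hxv, hv⟩
      _ ≤ {v : V | x ∈ v.1}.ncard := ncard_image_le (toFinite _)
      _ = {v ∈ V | x ∈ v}.ncard := by
          rw [← ncard_image_of_injective _ Subtype.val_injective]
          congr 1
          ext v
          simp [and_comm]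
      _ ≤ n + 1 := hVn x

theorem LatticeDimLE.covDimLE (h : LatticeDimLE {C : Set Y | IsClosed C} n) : CovDimLE Y n := by
  rintro U hUfin ⟨hUo, hUc⟩
  obtain ⟨m, e, -, rfl⟩ := hUfin.fin_param
  obtain ⟨G, hGc, heG, hG0, hGn⟩ := h m (fun i => (e i)ᶜ)
    (fun i => (hUo _ (mem_range_self i)).isClosed_compl)
    (by rw [← compl_iUnion, ← sUnion_range, hUc, compl_univ])
  refine ⟨range fun i => (G i)ᶜ, finite_range _,
    ⟨forall_mem_range.2 fun i => (hGc i).isOpen_compl, ?_⟩, ?_, fun x => ?_⟩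
  · rw [sUnion_range, ← compl_iInter, hG0, compl_empty]
  · exact forall_mem_range.2 fun i => ⟨e i, mem_range_self i, compl_subset_comm.1 (heG i)⟩
  · calc {v ∈ range fun i => (G i)ᶜ | x ∈ v}.ncard
        ≤ ((fun i => (G i)ᶜ) '' {i | x ∉ G i}).ncard := by
          refine ncard_le_ncard ?_ (toFinite _)
          rintro _ ⟨⟨i, rfl⟩, hx⟩
          exact ⟨i, hx, rfl⟩
      _ ≤ {i | x ∉ G i}.ncard := ncard_image_le (toFinite _)
      _ ≤ n + 1 := biUnion_eq_univ_iff_ncard_le.1 hGn x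

theorem covDimLE_iff_latticeDimLE : CovDimLE Y n ↔ LatticeDimLE {C : Set Y | IsClosed C} n :=
  ⟨CovDimLE.latticeDimLE, LatticeDimLE.covDimLE⟩

end CovDim

/-- A disjunctive family of sets, in the sense of Wallman: whenever `a ⊄ b`, some nonempty member
is contained in `a` and misses `b`. Wallman representation is then an order embedding. -/
def IsDisjunctive {T : Type u} (L : Set (Set T)) : Prop :=
  ∀ a ∈ L, ∀ b ∈ L, ¬a ⊆ b → ∃ c ∈ L, c.Nonempty ∧ c ⊆ a ∧ Disjoint c b

namespace LUltra

open Filter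

variable {T : Type u} {L : Set (Set T)}

/-- The basic closed set `â` of the Wallman space. -/
def hat (L : Set (Set T)) (a : Set T) : Set (LUltra L) :=
  {u | a ∈ u.sets}

theorem infClosed_sets (u : LUltra L) : InfClosed u.sets :=
  fun a ha b hb => u.inter_mem a ha b hb

theorem exists_sets_superset (hL : InfClosed L) (huniv : univ ∈ L) {S : Set (Set T)}
    (hSL : S ⊆ L) (hS : (generate S).NeBot) : ∃ u : LUltra L, S ⊆ u.sets := by
  have hchar : Order.IsOfFiniteCharacter {S | S ⊆ L ∧ (generate S).NeBot} := by
    intro S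
    simp only [mem_ofPred_eq, generate_neBot_iff]
    exact ⟨fun h t hts _ => ⟨hts.trans h.1, fun r hr => h.2 r (hr.trans hts)⟩,
      fun h => ⟨fun a ha => (h {a} (singleton_subset_iff.2 ha) (finite_singleton a)).1 rfl,
        fun t hts ht => (h t hts ht).2 t subset_rfl ht⟩⟩
  obtain ⟨P, hSP, hP⟩ := hchar.exists_maximal ⟨hSL, hS⟩
  have hPne : (generate P).NeBot := hP.prop.2
  have mem_of_neBot : ∀ a ∈ L, (generate P ⊓ 𝓟 a).NeBot → a ∈ P := by
    intro a ha hne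
    have hgen : generate (insert a P) = generate P ⊓ 𝓟 a := by
      rw [insert_eq, generate_union, generate_singleton, inf_comm]
    exact hP.le_of_ge ⟨insert_subset ha hP.prop.1, hgen ▸ hne⟩ (subset_insert a P)
      (mem_insert a P)
  have mem_of_mem_generate : ∀ a ∈ L, a ∈ generate P → a ∈ P := fun a ha haP =>
    mem_of_neBot a ha (by rwa [inf_eq_left.2 (le_principal_iff.2 haP)])
  have huP : univ ∈ P := mem_of_mem_generate _ huniv Filter.univ_mem
  have hinter : ∀ a ∈ P, ∀ b ∈ P, a ∩ b ∈ P := fun a ha b hb =>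
    mem_of_mem_generate _ (hL (hP.prop.1 ha) (hP.prop.1 hb))
      (Filter.inter_mem (mem_generate_of_mem ha) (mem_generate_of_mem hb))
  refine ⟨⟨P, hP.prop.1, huP, fun h => Filter.empty_notMem _ (mem_generate_of_mem h), hinter,
    fun a ha b hb hab => mem_of_mem_generate b hb (mem_of_superset (mem_generate_of_mem ha) hab),
    fun a ha haP => ?_⟩, hSP⟩
  have hcompl : aᶜ ∈ generate P :=
    inf_principal_eq_bot.1 (not_neBot.1 (mt (mem_of_neBot a ha) haP))
  obtain ⟨t, htP, ht, hta⟩ := mem_generate_iff.1 hcompl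
  have hPinf : InfClosed P := fun a ha b hb => hinter a ha b hb
  exact ⟨⋂₀ t, hPinf.sInf_mem ht huP htP, disjoint_iff_inter_eq_empty.1
    (disjoint_left.2 fun x hxa hxt => hta hxt hxa)⟩

theorem isClosed_hat {a : Set T} (ha : a ∈ L) : IsClosed (hat L a) :=
  ⟨isOpen_generateFrom_of_mem ⟨a, ha, rfl⟩⟩

theorem hat_empty : hat L ∅ = ∅ :=
  eq_empty_of_forall_notMem fun u => u.empty_notMem

theorem hat_univ : hat L univ = univ :=
  eq_univ_of_forall fun u => u.univ_mem

theorem hat_mono {a b : Set T} (hb : b ∈ L) (hab : a ⊆ b) : hat L a ⊆ hat L b :=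
  fun u hu => u.superset_mem a hu b hb hab

theorem hat_iInter {ι : Type v} [Finite ι] {F : ι → Set T} (hF : ∀ i, F i ∈ L) :
    hat L (⋂ i, F i) = ⋂ i, hat L (F i) :=
  (subset_iInter fun i => hat_mono (hF i) (iInter_subset F i)).antisymm fun u hu =>
    u.infClosed_sets.iInf_mem u.univ_mem (mem_iInter.1 hu)

theorem hat_union (hL : SupClosed L) {a b : Set T} (ha : a ∈ L) (hb : b ∈ L) :
    hat L (a ∪ b) = hat L a ∪ hat L b := by
  refine Subset.antisymm (fun u hu => ?_) (union_subset
    (hat_mono (hL ha hb) subset_union_left) (hat_mono (hL ha hb) subset_union_right))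
  by_contra! hn
  obtain ⟨ha', hb'⟩ := not_or.1 hn
  obtain ⟨c, hc, hac⟩ := u.ultra a ha ha'
  obtain ⟨d, hd, hbd⟩ := u.ultra b hb hb'
  have hdisj : (a ∪ b) ∩ (c ∩ d) = ∅ := by
    rw [union_inter_distrib_right, ← inter_assoc, hac, inter_left_comm, hbd]
    simp only [empty_inter, inter_empty, union_empty]
  exact u.empty_notMem (hdisj ▸ u.inter_mem _ hu _ (u.inter_mem c hc d hd))

theorem hat_biUnion (hL : SupClosed L) (hempty : ∅ ∈ L) {ι : Type v} {F : ι → Set T}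
    (hF : ∀ i, F i ∈ L) (S : Finset ι) : hat L (⋃ i ∈ S, F i) = ⋃ i ∈ S, hat L (F i) := by
  classical
  induction S using Finset.induction_on with
  | empty => simp only [Finset.notMem_empty, iUnion_of_empty, iUnion_empty, hat_empty]
  | insert i S _ ih =>
    have hS : ⋃ j ∈ S, F j ∈ L := hL.biSup_mem S.finite_toSet hempty fun j _ => hF j
    rw [Finset.set_biUnion_insert, Finset.set_biUnion_insert, hat_union hL (hF i) hS, ih]

theorem hat_subset_hat_iff (hL : InfClosed L) (huniv : univ ∈ L) (hdisj : IsDisjunctive L)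
    {a b : Set T} (ha : a ∈ L) (hb : b ∈ L) : hat L a ⊆ hat L b ↔ a ⊆ b := by
  refine ⟨fun h => ?_, hat_mono hb⟩
  by_contra hab
  obtain ⟨c, hc, hcne, hca, hcb⟩ := hdisj a ha b hb hab
  obtain ⟨u, hu⟩ := exists_sets_superset hL huniv (singleton_subset_iff.2 hc)
    (by rwa [generate_singleton, principal_neBot_iff])
  have hcu : c ∈ u.sets := hu rfl
  have hbu : b ∈ u.sets := h (u.superset_mem c hcu a ha hca)
  exact u.empty_notMem (hcb.inter_eq ▸ u.inter_mem c hcu b hbu)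

theorem exists_subset_hat_notMem (hL : SupClosed L) (hempty : ∅ ∈ L) {C : Set (LUltra L)}
    (hC : IsClosed C) {u : LUltra L} (hu : u ∉ C) : ∃ a ∈ L, C ⊆ hat L a ∧ u ∉ hat L a := by
  have hbasis : IsTopologicalBasis (insert univ {s | ∃ a ∈ L, s = (hat L a)ᶜ}) := by
    refine isTopologicalBasis_of_subbasis_of_inter rfl ?_
    rintro _ ⟨a, ha, rfl⟩ _ ⟨b, hb, rfl⟩
    exact ⟨a ∪ b, hL ha hb, by rw [hat_union hL ha hb, compl_union]⟩
  obtain ⟨_, rfl | ⟨a, ha, rfl⟩, hus, hsC⟩ :=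
    hbasis.exists_subset_of_mem_open (show u ∈ Cᶜ from hu) hC.isOpen_compl
  · exact ⟨∅, hempty, fun w hw => (hsC (mem_univ w) hw).elim, u.empty_notMem⟩
  · exact ⟨a, ha, compl_subset_compl.1 hsC, hus⟩

/- Compactness of the Wallman space, in lattice form: were no finite part of the family of all
`a ∈ L` with `C i ⊆ â` for some `i` to have empty intersection, an ultrafilter containing that
family would be a common point of the `C i`. -/
theorem exists_subset_hat_iInter_eq_empty (hL : IsSublattice L) (hempty : ∅ ∈ L)
    (huniv : univ ∈ L) {ι : Type v} {C : ι → Set (LUltra L)} (hC : ∀ i, IsClosed (C i))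
    (hC0 : ⋂ i, C i = ∅) :
    ∃ F : ι → Set T, (∀ i, F i ∈ L) ∧ (∀ i, C i ⊆ hat L (F i)) ∧ ⋂ i, F i = ∅ := by
  let S : Set (Set T) := {a | a ∈ L ∧ ∃ i, C i ⊆ hat L a}
  have hS : ¬(generate S).NeBot := fun hne => by
    obtain ⟨u, hu⟩ := exists_sets_superset hL.infClosed huniv (fun a ha => ha.1) hne
    obtain ⟨i, hi⟩ : ∃ i, u ∉ C i := by
      simpa only [mem_iInter, not_forall] using eq_empty_iff_forall_notMem.1 hC0 u
    obtain ⟨a, ha, hCa, hua⟩ := exists_subset_hat_notMem hL.supClosed hempty (hC i) hi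
    exact hua (hu ⟨ha, i, hCa⟩)
  simp only [generate_neBot_iff, not_forall, not_nonempty_iff_eq_empty] at hS
  obtain ⟨t, htS, ht, ht0⟩ := hS
  refine ⟨fun i => ⋂₀ {a ∈ t | C i ⊆ hat L a}, fun i => ?_, fun i u hu => ?_, ?_⟩
  · exact hL.infClosed.sInf_mem (ht.sep _) huniv fun a ha => (htS ha.1).1
  · exact u.infClosed_sets.sInf_mem (ht.sep _) u.univ_mem fun a ha => ha.2 hu
  · refine subset_empty_iff.1 (ht0 ▸ fun x hx a ha => ?_)
    obtain ⟨i, hi⟩ := (htS ha).2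
    exact mem_iInter.1 hx i a ⟨ha, hi⟩

theorem isSwelling_hat_iff (hL : IsSublattice L) (hempty : ∅ ∈ L) (huniv : univ ∈ L)
    (hdisj : IsDisjunctive L) {ι : Type v} [Finite ι] {n : ℕ} {F G : ι → Set T}
    (hF : ∀ i, F i ∈ L) (hG : ∀ i, G i ∈ L) :
    IsSwelling n (fun i => hat L (F i)) (fun i => hat L (G i)) ↔ IsSwelling n F G := by
  have embed {a b : Set T} (ha : a ∈ L) (hb : b ∈ L) : hat L a ⊆ hat L b ↔ a ⊆ b :=
    hat_subset_hat_iff hL.infClosed huniv hdisj ha hb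
  have hsub (i : ι) : hat L (F i) ⊆ hat L (G i) ↔ F i ⊆ G i := embed (hF i) (hG i)
  have hinter : ⋂ i, hat L (G i) = ∅ ↔ ⋂ i, G i = ∅ := by
    have hmem : ⋂ i, G i ∈ L := hL.infClosed.iInf_mem huniv hG
    rw [← hat_iInter hG, ← subset_empty_iff, ← hat_empty, embed hmem hempty, subset_empty_iff]
  have hunion (S : Finset ι) : ⋃ i ∈ S, hat L (G i) = univ ↔ ⋃ i ∈ S, G i = univ := by
    have hmem : ⋃ i ∈ S, G i ∈ L :=
      hL.supClosed.biSup_mem S.finite_toSet hempty fun i _ => hG i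
    rw [← hat_biUnion hL.supClosed hempty hG, ← univ_subset_iff, ← hat_univ, embed huniv hmem,
      univ_subset_iff]
  exact ⟨fun h => ⟨fun i => (hsub i).1 (h.subset i), hinter.1 h.iInter_eq_empty,
      fun S hS => (hunion S).1 (h.biUnion_eq_univ S hS)⟩,
    fun h => ⟨fun i => (hsub i).2 (h.subset i), hinter.2 h.iInter_eq_empty,
      fun S hS => (hunion S).2 (h.biUnion_eq_univ S hS)⟩⟩

theorem latticeDimLE_isClosed_iff (hL : IsSublattice L) (hempty : ∅ ∈ L) (huniv : univ ∈ L)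
    (hdisj : IsDisjunctive L) {n : ℕ} :
    LatticeDimLE {C : Set (LUltra L) | IsClosed C} n ↔ LatticeDimLE L n := by
  constructor
  · intro h m F hF hF0
    obtain ⟨C, hC, hFC⟩ := h m (fun i => hat L (F i)) (fun i => isClosed_hat (hF i))
      (by rw [← hat_iInter hF, hF0, hat_empty])
    obtain ⟨G, hG, hCG, hG0⟩ :=
      exists_subset_hat_iInter_eq_empty hL hempty huniv hC hFC.iInter_eq_empty
    exact ⟨G, hG, (isSwelling_hat_iff hL hempty huniv hdisj hF hG).1
      (hFC.mono_right hCG (by rw [← hat_iInter hG, hG0, hat_empty]))⟩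
  · intro h m C hC hC0
    obtain ⟨F, hF, hCF, hF0⟩ := exists_subset_hat_iInter_eq_empty hL hempty huniv hC hC0
    obtain ⟨G, hG, hFG⟩ := h m F hF hF0
    exact ⟨fun i => hat L (G i), fun i => isClosed_hat (hG i),
      ((isSwelling_hat_iff hL hempty huniv hdisj hF hG).2 hFG).anti_left hCF⟩

end LUltra

section Definability

variable {L : Language} {N : Type*} [L.Structure N] {α β ι : Type*}

theorem definable_setOf_boolean {A : Set N} [Finite ι] {R : ι → Set (α → N)}
    (hR : ∀ i, A.Definable L (R i)) (P : (ι → Prop) → Prop) :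
    A.Definable L {v | P fun i => v ∈ R i} := by
  have hatom (p : ι → Prop) : A.Definable L {v : α → N | (fun i => v ∈ R i) = p} := by
    simp only [funext_iff, ofPred_forall]
    refine definable_iInter_of_finite fun i => ?_
    by_cases hp : p i
    · simpa only [hp, eq_iff_iff, iff_true] using! hR i
    · simpa only [hp, eq_iff_iff, iff_false] using! (hR i).compl
  have hunion : {v | P fun i => v ∈ R i} =
      ⋃ p : {p // P p}, {v | (fun i => v ∈ R i) = p} := by
    ext v
    simp only [mem_ofPred_eq, mem_iUnion, Subtype.exists, exists_prop, exists_eq_right']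
  exact hunion ▸ definable_iUnion_of_finite fun p => hatom p

theorem exists_mem_of_definable (M : L.ElementarySubstructure N) [Finite β] {S : Set (β → N)}
    (hS : (M : Set N).Definable L S) (hne : S.Nonempty) : ∃ v ∈ S, ∀ b, v b ∈ M := by
  obtain ⟨φ, rfl⟩ := (definable_iff_exists_formula_sum (L := L)).1 hS
  obtain ⟨v, hv⟩ := hne
  have hN : (φ.iExs β).Realize (M.subtype ∘ id) := Language.Formula.realize_iExs.2 ⟨v, hv⟩
  rw [M.subtype.map_formula, Language.Formula.realize_iExs] at hN
  obtain ⟨w, hw⟩ := hN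
  refine ⟨fun b => w b, ?_, fun b => (w b).2⟩
  rwa [← M.subtype.map_formula, Sum.comp_elim] at hw

end Definability

section HKappa

variable {κ : Cardinal.{1}} {x y : ZFSet.{0}}

theorem heredLt_iff : HeredLt κ x ↔ Cardinal.mk x.toSet < κ ∧ ∀ y ∈ x, HeredLt κ y := by
  unfold HeredLt
  rw [WellFounded.fix_eq]

theorem HeredLt.of_mem (hx : HeredLt κ x) (hy : y ∈ x) : HeredLt κ y :=
  (heredLt_iff.1 hx).2 y hy

theorem HeredLt.of_subset (hx : HeredLt κ x) (hy : y ⊆ x) : HeredLt κ y :=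
  heredLt_iff.2 ⟨(Cardinal.mk_le_mk_of_subset fun _ hz => hy hz).trans_lt (heredLt_iff.1 hx).1,
    fun _ hz => hx.of_mem (hy hz)⟩

theorem HKappa.definable_mem {α : Type*} {A : Set (HKappa κ)}
    {f g : (α → HKappa κ) → HKappa κ} (hf : A.DefinableFun Language.graph f)
    (hg : A.DefinableFun Language.graph g) :
    A.Definable Language.graph {v | (f v).1 ∈ (g v).1} := by
  have hadj : A.Definable Language.graph {v : Fin 2 → HKappa κ | (v 0).1 ∈ (v 1).1} := by
    refine Definable.mono (empty_definable_iff.2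
      ⟨Language.adj.formula₂ (.var 0) (.var 1), ?_⟩) (empty_subset A)
    ext v
    change _ ↔ Language.Formula.Realize _ v
    rw [Language.Formula.realize_rel₂]
    rfl
  have hmap : A.DefinableMap Language.graph fun v => ![f v, g v] := by
    intro i
    fin_cases i
    exacts [hf, hg]
  exact hadj.preimage_map hmap

theorem HKappa.definable_subset {α : Type*} {A : Set (HKappa κ)} {a : HKappa κ} (ha : a ∈ A)
    (i : α) : A.Definable Language.graph {v : α → HKappa κ | (v i).1 ⊆ a.1} := by
  have hmem : A.Definable Language.graph
      {w : α ⊕ Unit → HKappa κ | (w (.inr ())).1 ∈ (w (.inl i)).1} :=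
    HKappa.definable_mem (.proj _) (.proj _)
  have hmem_a : A.Definable Language.graph {w : α ⊕ Unit → HKappa κ | (w (.inr ())).1 ∈ a.1} :=
    HKappa.definable_mem (.proj _) (Language.definableFun_const _ _ ha)
  convert! (hmem.himp hmem_a).forall_of_finite using 1
  ext v
  exact ⟨fun h u hu => h hu, fun h z hz => h (fun _ => ⟨z, (v i).2.of_mem hz⟩) hz⟩

end HKappa

section Codes

variable {X : ZFSet.{0}} {κ : Cardinal.{1}} {A : Set ↥X.toSet}

theorem mem_codeSet {y : ZFSet.{0}} : y ∈ codeSet X A ↔ ∃ h : y ∈ X.toSet, ⟨y, h⟩ ∈ A :=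
  ZFSet.mem_sep.trans ⟨And.right, fun h => ⟨h.1, h⟩⟩

theorem codeSet_subset : codeSet X A ⊆ X :=
  fun _ hy => (mem_codeSet.1 hy).1

theorem decodeSet_codeSet : decodeSet X (codeSet X A) = A := by
  ext x
  exact mem_codeSet.trans ⟨fun h => h.2, fun h => ⟨x.2, h⟩⟩

theorem codeSet_decodeSet {t : ZFSet.{0}} (ht : t ⊆ X) : codeSet X (decodeSet X t) = t := by
  ext y
  exact mem_codeSet.trans ⟨fun h => h.2, fun h => ⟨ht h, h⟩⟩

theorem mem_opensZ [TopologicalSpace ↥X.toSet] {t : ZFSet.{0}} :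
    t ∈ opensZ X ↔ t ⊆ X ∧ IsOpen (decodeSet X t) :=
  ZFSet.mem_sep.trans (and_congr_left' ZFSet.mem_powerset)

end Codes

section SetRelDefinable

variable {X : ZFSet.{0}} {κ : Cardinal.{1}}
  {M : Language.graph.ElementarySubstructure (HKappa κ)} {ι β : Type*}

/-- The tuple of subsets of `X` represented by a tuple of elements of `H(κ)`: an element stands
for its trace on `X`, so that every tuple represents one. -/
def decodeTuple (X : ZFSet.{0}) {κ : Cardinal.{1}} {ι : Type*} (v : ι → HKappa κ) :
    ι → Set ↥X.toSet :=
  fun i => decodeSet X (v i).1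

theorem decodeTuple_sumElim (v : ι → HKappa κ) (w : β → HKappa κ) :
    decodeTuple X (Sum.elim v w) = Sum.elim (decodeTuple X v) (decodeTuple X w) := by
  ext1 (i | b) <;> rfl

theorem decodeTuple_surjective (hX : HeredLt κ X) :
    Function.Surjective (decodeTuple X : (ι → HKappa κ) → ι → Set ↥X.toSet) :=
  fun A => ⟨fun i => ⟨codeSet X (A i), hX.of_subset codeSet_subset⟩,
    funext fun _ => decodeSet_codeSet⟩

/-- The relation `R` between subsets of `X` is first-order definable in `H(κ)` with parameters
from `M`. -/
def SetRelDefinable (X : ZFSet.{0}) {κ : Cardinal.{1}}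
    (M : Language.graph.ElementarySubstructure (HKappa κ)) {ι : Type*}
    (R : Set (ι → Set ↥X.toSet)) : Prop :=
  (M : Set (HKappa κ)).Definable Language.graph {v : ι → HKappa κ | decodeTuple X v ∈ R}

theorem SetRelDefinable.inter {R S : Set (ι → Set ↥X.toSet)} (hR : SetRelDefinable X M R)
    (hS : SetRelDefinable X M S) : SetRelDefinable X M (R ∩ S) :=
  Definable.inter hR hS

theorem SetRelDefinable.compl {R : Set (ι → Set ↥X.toSet)} (hR : SetRelDefinable X M R) :
    SetRelDefinable X M Rᶜ :=
  Definable.compl hR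

theorem MemOf.exists_coe_eq {z : ZFSet.{0}} (hz : MemOf κ M z) : ∃ a ∈ M, a.1 = z :=
  hz.elim fun h hM => ⟨⟨z, h⟩, hM, rfl⟩

theorem definable_forall_point (hX : MemOf κ M X) [Finite ι] (P : (ι → Prop) → Prop) :
    SetRelDefinable X M {A : ι → Set ↥X.toSet | ∀ x, P fun i => x ∈ A i} := by
  obtain ⟨a, haM, rfl⟩ := hX.exists_coe_eq
  let R : Option ι → Set (ι ⊕ Unit → HKappa κ)
    | none => {w | (w (.inr ())).1 ∈ a.1}
    | some i => {w | (w (.inr ())).1 ∈ (w (.inl i)).1}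
  have hR : ∀ o, (M : Set (HKappa κ)).Definable Language.graph (R o)
    | none => HKappa.definable_mem (.proj _) (Language.definableFun_const _ _ haM)
    | some i => HKappa.definable_mem (.proj _) (.proj _)
  unfold SetRelDefinable
  convert! Definable.forall_of_finite
    (definable_setOf_boolean hR fun p => p none → P fun i => p (some i)) using 1
  ext v
  exact ⟨fun h u hu => h ⟨(u ()).1, hu⟩,
    fun h x => h (fun _ => ⟨x.1, HeredLt.of_mem a.2 x.2⟩) x.2⟩

theorem SetRelDefinable.exists (hX : HeredLt κ X) [Finite β] {R : Set (ι ⊕ β → Set ↥X.toSet)}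
    (hR : SetRelDefinable X M R) : SetRelDefinable X M {A | ∃ B, Sum.elim A B ∈ R} := by
  unfold SetRelDefinable
  convert! Definable.exists_of_finite hR using 1
  ext v
  simp only [mem_ofPred_eq, decodeTuple_sumElim, (decodeTuple_surjective hX).exists]

theorem SetRelDefinable.fiber {B : β → Set ↥X.toSet} [Finite ι] [Finite β]
    (hB : ∀ b, MemOf κ M (codeSet X (B b))) {R : Set (β ⊕ ι → Set ↥X.toSet)}
    (hR : SetRelDefinable X M R) : SetRelDefinable X M {A | Sum.elim B A ∈ R} := by
  choose b hbM hb using fun i => (hB i).exists_coe_eq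
  have hmap : (M : Set (HKappa κ)).DefinableMap Language.graph
      fun v : ι → HKappa κ => Sum.elim b v
    | .inl i => Language.definableFun_const _ _ (hbM i)
    | .inr i => .proj _
  unfold SetRelDefinable
  convert! Definable.preimage_map hmap hR using 1
  have hbB : decodeTuple X b = B := funext fun i => by rw [decodeTuple, hb, decodeSet_codeSet]
  ext v
  simp only [mem_ofPred_eq, mem_preimage, decodeTuple_sumElim, hbB]

theorem definable_isClosed [TopologicalSpace ↥X.toSet] (hX : MemOf κ M X)
    (htop : MemOf κ M (opensZ X)) (i : ι) :
    SetRelDefinable X M {A : ι → Set ↥X.toSet | IsClosed (A i)} := by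
  obtain ⟨o, hoM, ho⟩ := htop.exists_coe_eq
  have hopen : (M : Set (HKappa κ)).Definable Language.graph
      {v : Fin 2 → HKappa κ | (v 1).1 ∈ opensZ X} :=
    ho ▸ HKappa.definable_mem (.proj _) (Language.definableFun_const _ _ hoM)
  have hcompl : SetRelDefinable X M {A : Fin 2 → Set ↥X.toSet | ∀ x, x ∈ A 1 ↔ x ∉ A 0} :=
    definable_forall_point hX fun p => p 1 ↔ ¬p 0
  unfold SetRelDefinable
  convert! Definable.exists_of_finite (β := Unit)
    ((hopen.inter hcompl).preimage_comp ![Sum.inl i, Sum.inr ()]) using 1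
  ext v
  constructor
  · intro hv
    obtain ⟨hXH, -⟩ := hX
    refine ⟨fun _ => ⟨codeSet X (decodeSet X (v i).1)ᶜ, HeredLt.of_subset hXH codeSet_subset⟩,
      mem_opensZ.2 ⟨codeSet_subset, ?_⟩, fun x => ?_⟩
    · exact decodeSet_codeSet.symm ▸ hv.isOpen_compl
    · exact (Set.ext_iff.1 decodeSet_codeSet x)
  · rintro ⟨u, hu, hcompl⟩
    have : decodeSet X (u ()).1 = (decodeSet X (v i).1)ᶜ := Set.ext hcompl
    exact isOpen_compl_iff.1 (this ▸ (mem_opensZ.1 hu).2)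

theorem definable_forall_isClosed [TopologicalSpace ↥X.toSet] (hX : MemOf κ M X)
    (htop : MemOf κ M (opensZ X)) [Finite β] (f : β → ι) :
    SetRelDefinable X M {A : ι → Set ↥X.toSet | ∀ b, IsClosed (A (f b))} := by
  simp only [SetRelDefinable, mem_ofPred_eq]
  rw [ofPred_forall]
  exact definable_iInter_of_finite fun b => definable_isClosed hX htop (f b)

theorem SetRelDefinable.exists_memOf (hX : MemOf κ M X) [Finite ι] {R : Set (ι → Set ↥X.toSet)}
    (hR : SetRelDefinable X M R) (hne : R.Nonempty) :
    ∃ A ∈ R, ∀ i, MemOf κ M (codeSet X (A i)) := by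
  obtain ⟨a, haM, rfl⟩ := hX.exists_coe_eq
  have hsub : (M : Set (HKappa κ)).Definable Language.graph
      {v : ι → HKappa κ | ∀ i, (v i).1 ⊆ a.1} := by
    rw [ofPred_forall]
    exact definable_iInter_of_finite fun i => HKappa.definable_subset haM i
  obtain ⟨A, hA⟩ := hne
  let w : ι → HKappa κ := fun i => ⟨codeSet a (A i), HeredLt.of_subset a.2 codeSet_subset⟩
  have hw : decodeTuple a w = A := funext fun _ => decodeSet_codeSet
  obtain ⟨v, ⟨hv, hva⟩, hvM⟩ := exists_mem_of_definable M (Definable.inter hR hsub)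
    ⟨w, by rwa [← hw] at hA, fun _ => codeSet_subset⟩
  exact ⟨decodeTuple a v, hv, fun i =>
    (codeSet_decodeSet (hva i)).symm ▸ ⟨(v i).2, hvM i⟩⟩

theorem memOf_codeSet_of_boolean [Finite ι] (hX : MemOf κ M X)
    {A : Set ↥X.toSet} {B : ι → Set ↥X.toSet} (hB : ∀ i, MemOf κ M (codeSet X (B i)))
    (P : (ι → Prop) → Prop) (hA : ∀ x, x ∈ A ↔ P fun i => x ∈ B i) : MemOf κ M (codeSet X A) := by
  have hdef : SetRelDefinable X M
      {C : ι ⊕ Unit → Set ↥X.toSet | ∀ x, x ∈ C (.inr ()) ↔ P fun i => x ∈ C (.inl i)} :=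
    definable_forall_point hX fun p => p (Sum.inr ()) ↔ P fun i => p (Sum.inl i)
  obtain ⟨C, hC, hCM⟩ := (hdef.fiber hB).exists_memOf hX ⟨fun _ => A, hA⟩
  have hCA : C () = A := Set.ext fun x => (hC x).trans (hA x).symm
  exact hCA ▸ hCM ()

end SetRelDefinable

section Reflection

variable {X : ZFSet.{0}} [TopologicalSpace ↥X.toSet] {κ : Cardinal.{1}}
  {M : Language.graph.ElementarySubstructure (HKappa κ)}

theorem univ_mem_Lfam (hX : MemOf κ M X) : univ ∈ Lfam X κ M :=
  ⟨isClosed_univ, memOf_codeSet_of_boolean (B := Empty.elim) hX (fun i => i.elim)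
    (fun _ => True) fun _ => iff_of_true trivial trivial⟩

theorem empty_mem_Lfam (hX : MemOf κ M X) : ∅ ∈ Lfam X κ M :=
  ⟨isClosed_empty, memOf_codeSet_of_boolean (B := Empty.elim) hX (fun i => i.elim)
    (fun _ => False) fun _ => Iff.rfl⟩

theorem isSublattice_Lfam (hX : MemOf κ M X) : IsSublattice (Lfam X κ M) where
  supClosed A hA B hB := ⟨hA.1.union hB.1, memOf_codeSet_of_boolean (B := ![A, B]) hX
    (Fin.forall_fin_two.2 ⟨hA.2, hB.2⟩) (fun p => p 0 ∨ p 1) fun _ => Iff.rfl⟩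
  infClosed A hA B hB := ⟨hA.1.inter hB.1, memOf_codeSet_of_boolean (B := ![A, B]) hX
    (Fin.forall_fin_two.2 ⟨hA.2, hB.2⟩) (fun p => p 0 ∧ p 1) fun _ => Iff.rfl⟩

theorem isDisjunctive_Lfam [T1Space ↥X.toSet] (hX : MemOf κ M X) (htop : MemOf κ M (opensZ X)) :
    IsDisjunctive (Lfam X κ M) := by
  intro A hA B hB hAB
  obtain ⟨x, hxA, hxB⟩ := not_subset.1 hAB
  have hclosed : SetRelDefinable X M {C : Fin 2 ⊕ Unit → Set ↥X.toSet | IsClosed (C (.inr ()))} :=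
    definable_isClosed hX htop _
  have hempty : SetRelDefinable X M {C : Fin 2 ⊕ Unit → Set ↥X.toSet | ∀ x, x ∉ C (.inr ())} :=
    definable_forall_point hX fun p => ¬p (Sum.inr ())
  have hsub : SetRelDefinable X M {C : Fin 2 ⊕ Unit → Set ↥X.toSet |
      ∀ x, x ∈ C (.inr ()) → x ∈ C (.inl 0) ∧ x ∉ C (.inl 1)} :=
    definable_forall_point hX fun p => p (Sum.inr ()) → p (Sum.inl 0) ∧ ¬p (Sum.inl 1)
  obtain ⟨C, ⟨⟨hC, hCne⟩, hCAB⟩, hCM⟩ :=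
    (((hclosed.inter hempty.compl).inter hsub).fiber (B := ![A, B])
      (Fin.forall_fin_two.2 ⟨hA.2, hB.2⟩)).exists_memOf hX
      ⟨fun _ => {x}, ⟨isClosed_singleton, fun h => h x rfl⟩, by
        rintro _ rfl
        exact ⟨hxA, hxB⟩⟩
  exact ⟨C (), ⟨hC, hCM ()⟩, nonempty_iff_ne_empty.2 (mt eq_empty_iff_forall_notMem.1 hCne),
    fun y hy => (hCAB y hy).1, disjoint_left.2 fun y hy => (hCAB y hy).2⟩

theorem definable_isClosed_isSwelling {ι : Type*} [Finite ι] (hX : MemOf κ M X)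
    (htop : MemOf κ M (opensZ X)) (n : ℕ) :
    SetRelDefinable X M {C : ι ⊕ ι → Set ↥X.toSet |
      (∀ i, IsClosed (C (.inr i))) ∧ IsSwelling n (C ∘ .inl) (C ∘ .inr)} := by
  refine (definable_forall_isClosed hX htop Sum.inr).inter ?_
  simp only [isSwelling_iff_forall_point]
  exact definable_forall_point hX fun p =>
    (∀ i, p (Sum.inl i) → p (Sum.inr i)) ∧ (∃ i, ¬p (Sum.inr i)) ∧
      ∀ S : Finset ι, S.card = n + 2 → ∃ i ∈ S, p (Sum.inr i)

theorem latticeDimLE_Lfam_iff (hX : MemOf κ M X) (htop : MemOf κ M (opensZ X)) {n : ℕ} :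
    LatticeDimLE (Lfam X κ M) n ↔ LatticeDimLE {C : Set ↥X.toSet | IsClosed C} n := by
  constructor
  · intro h m
    by_contra! hbad
    have hempty : SetRelDefinable X M {F : Fin m → Set ↥X.toSet | ∀ x, ¬∀ i, x ∈ F i} :=
      definable_forall_point hX fun p => ¬∀ i, p i
    have hswell := (definable_isClosed_isSwelling (ι := Fin m) hX htop n).exists hX.1
    obtain ⟨F₀, hF₀, hF₀0, hF₀n⟩ := hbad
    obtain ⟨F, ⟨⟨hF, hF0⟩, hFn⟩, hFM⟩ :=
      (((definable_forall_isClosed hX htop id).inter hempty).inter hswell.compl).exists_memOf hX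
        ⟨F₀, ⟨hF₀, fun x hx => eq_empty_iff_forall_notMem.1 hF₀0 x (mem_iInter.2 hx)⟩,
          fun ⟨G, hG, hFG⟩ => hF₀n G hG hFG⟩
    obtain ⟨G, hG, hFG⟩ := h m F (fun i => ⟨hF i, hFM i⟩)
      (eq_empty_of_forall_notMem fun x hx => hF0 x (mem_iInter.1 hx))
    exact hFn ⟨G, fun i => (hG i).1, hFG⟩
  · intro h m F hF hF0
    obtain ⟨G, hG, hFG⟩ := h m F (fun i => (hF i).1) hF0
    obtain ⟨H, ⟨hH, hFH⟩, hHM⟩ := ((definable_isClosed_isSwelling hX htop n).fiber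
      fun i => (hF i).2).exists_memOf hX ⟨G, hG, hFG⟩
    exact ⟨H, fun i => ⟨hH i, hHM i⟩, hFH⟩

end Reflection

theorem covDim_wallman_eq_general (X : ZFSet.{0}) [TopologicalSpace ↥X.toSet] [T1Space ↥X.toSet]
    (κ : Cardinal.{1}) (M : FirstOrder.Language.graph.ElementarySubstructure (HKappa κ))
    (hXM : MemOf κ M X) (htopM : MemOf κ M (opensZ X)) :
    covDim (LUltra (Lfam X κ M)) = covDim ↥X.toSet := by
  have key (n : ℕ) : CovDimLE (LUltra (Lfam X κ M)) n ↔ CovDimLE ↥X.toSet n :=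
    calc CovDimLE (LUltra (Lfam X κ M)) n
        ↔ LatticeDimLE {C : Set (LUltra (Lfam X κ M)) | IsClosed C} n := covDimLE_iff_latticeDimLE
      _ ↔ LatticeDimLE (Lfam X κ M) n :=
          LUltra.latticeDimLE_isClosed_iff (isSublattice_Lfam hXM) (empty_mem_Lfam hXM)
            (univ_mem_Lfam hXM) (isDisjunctive_Lfam hXM htopM)
      _ ↔ LatticeDimLE {C : Set ↥X.toSet | IsClosed C} n := latticeDimLE_Lfam_iff hXM htopM
      _ ↔ CovDimLE ↥X.toSet n := covDimLE_iff_latticeDimLE.symm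
  simp only [covDim, key]

/-- For a compact Hausdorff space `X` and a countable elementary submodel
`M ≺ H(κ)` with `X ∈ M`, with `L = 2^X ∩ M`, the covering dimension of the Wallman space
`wL` equals the covering dimension of `X`. -/
theorem covDim_wallman_eq
    (X : ZFSet.{0}) [TopologicalSpace ↥X.toSet] [CompactSpace ↥X.toSet]
    [T2Space ↥X.toSet]
    (κ : Cardinal.{1}) (hreg : κ.IsRegular) (hbig : HeredLt κ X.powerset.powerset)
    (M : FirstOrder.Language.graph.ElementarySubstructure (HKappa κ))
    (hMcount : Countable M) (hXM : MemOf κ M X) (htopM : MemOf κ M (opensZ X)) :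
    covDim (LUltra (Lfam X κ M)) = covDim ↥X.toSet := by
  exact covDim_wallman_eq_general X κ M hXM htopM
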